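/- q-deformed inverse Cartan matrix identity: let M, N ≥ 0 be integers with M ≠ N and set n′ = M+N+1. Then for every q ∈ ℂ∖{0} with q² ≠ 1, every integer m ≥ 1, and all 1 ≤ i, j ≤ n′: Σ_{k=1}^{n′} [α_{ik} m]_q · [β_{ik} m]_q · [A_{kj} m]_q = δ_{ij} · [(M−N) m]_q · ([m]_q)². (This identity is equivalent to the commutation relation [h*_{i,m}, h_{j,n}] = δ_{ij} δ_{m+n,0} [m]_q²/m for the dual bosonic generators h*_{i,m} = Σ_j ([α_{ij}m]_q[β_{ij}m]_q/([(M−N)m]_q[m]_q)) h_{j,m} at level c = 1.) -/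

import Mathlib

noncomputable section

/-- The q-integer `[a]_q = (q^a − q^{−a})/(q − q^{−1})`. -/
def qint (q : ℂ) (a : ℤ) : ℂ := (q ^ a - q ^ (-a)) / (q - q⁻¹)

/-- `α_{ij}`: `min(i,j)` (1-based) if `min(i,j) ≤ M+1`, else `2(M+1) − min(i,j)`. -/
def alphaC (M : ℕ) {n' : ℕ} (i j : Fin n') : ℤ :=
  if min (i : ℕ) (j : ℕ) ≤ M then (min (i : ℕ) (j : ℕ) : ℤ) + 1
  else (2 * (M : ℤ) + 1) - (min (i : ℕ) (j : ℕ) : ℤ)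

/-- `β_{ij}`: `M − N − max(i,j)` (1-based) if `max(i,j) ≤ M+1`,
else `−M − N − 2 + max(i,j)`. -/
def betaC (M N : ℕ) {n' : ℕ} (i j : Fin n') : ℤ :=
  if max (i : ℕ) (j : ℕ) ≤ M then (M : ℤ) - (N : ℤ) - ((max (i : ℕ) (j : ℕ) : ℤ) + 1)
  else -(M : ℤ) - (N : ℤ) - 2 + ((max (i : ℕ) (j : ℕ) : ℤ) + 1)

/-- The Cartan matrix of `sl(M+1|N+1)` in the distinguished basis
(indices 1-based, here realised on `Fin (M+N+1)` with 0-based values). -/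
def CartanSL (M N : ℕ) (i j : Fin (M + N + 1)) : ℤ :=
  if i = j then (if (i : ℕ) < M then 2 else if (i : ℕ) = M then 0 else -2)
  else if (i : ℕ) + 1 = (j : ℕ) ∨ (j : ℕ) + 1 = (i : ℕ) then
    (if min (i : ℕ) (j : ℕ) < M then -1 else 1)
  else 0

/-!
Let `s` be the partial sums of the parities `ε`, let `n = n'` and `f a = [a m]`. A row of the matrix
`[α m] [β m]` is the discrete Green's function `p ↦ φ (min i p) * ψ (max i p)` of the Jacobi
operator with matrix `[A m]`, where `φ p = f (s p)` and `ψ p = f (s (n + 1) - s p)` are the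
homogeneous solutions that vanish at the two ends `p = 0` and `p = n + 1`. Hence the product with
`[A m]` is diagonal, with entries given by the Casoratian of `φ` and `ψ`. That `φ` and `ψ` are
solutions and what their Casoratian is only depends on the three-term recurrence of the
`q`-integers, for every choice of parities.
-/

/-- The Jacobi operator on sequences with off-diagonal coefficients `a` and diagonal coefficients
`b`. Its value at `j` is centred at `j + 1`, so that the left end of the lattice is `0`. -/
def jacobiOp {R : Type*} [Semiring R] (a b g : ℕ → R) (j : ℕ) : R :=
  a j * g j + b j * g (j + 1) + a (j + 1) * g (j + 2)

/-- The symmetric tridiagonal matrix of `jacobiOp a b`: the indices `k`, `j` stand for the lattice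
points `k + 1`, `j + 1`, and the points `j`, `j + 1` are joined by `a j`. -/
def jacobiMatrix {R : Type*} [Zero R] (a b : ℕ → R) (k j : ℕ) : R :=
  if k = j then b j else if k + 1 = j then a j else if j + 1 = k then a k else 0

lemma map_jacobiMatrix {R S : Type*} [Zero R] [Zero S] {f : R → S} (hf : f 0 = 0)
    (a b : ℕ → R) (k j : ℕ) :
    f (jacobiMatrix a b k j) = jacobiMatrix (f ∘ a) (f ∘ b) k j := by
  simp only [jacobiMatrix, apply_ite f, hf, Function.comp_apply]

lemma jacobiMatrix_eq_add {R : Type*} [AddMonoid R] (a b : ℕ → R) (k j : ℕ) :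
    jacobiMatrix a b k j =
      (if k + 1 = j then a j else 0) + (if k + 1 = j + 1 then b j else 0) +
        (if k + 1 = j + 2 then a (j + 1) else 0) := by
  unfold jacobiMatrix
  grind

lemma sum_mul_jacobiMatrix {R : Type*} [CommSemiring R] (a b g : ℕ → R) {n : ℕ}
    (h_left : g 0 = 0) (h_right : g (n + 1) = 0) (j : Fin n) :
    ∑ k : Fin n, g (k + 1) * jacobiMatrix a b k j = jacobiOp a b g j := by
  have sum_single (p : ℕ) (hp : p ≤ n + 1) (c : R) :
      ∑ k : Fin n, g (k + 1) * (if (k : ℕ) + 1 = p then c else 0) = g p * c := by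
    rw [Fin.sum_univ_eq_sum_range (fun k ↦ g (k + 1) * if k + 1 = p then c else 0)]
    calc ∑ k ∈ Finset.range n, g (k + 1) * (if k + 1 = p then c else 0)
        = ∑ k ∈ Finset.range (n + 2), g k * (if k = p then c else 0) := by
          rw [Finset.sum_range_succ, Finset.sum_range_succ', h_left, h_right, zero_mul, zero_mul,
            add_zero, add_zero]
      _ = g p * c := by simp [Nat.lt_succ_of_le hp]
  simp only [jacobiMatrix_eq_add, mul_add, Finset.sum_add_distrib]
  rw [sum_single j (by omega), sum_single (j + 1) (by omega), sum_single (j + 2) (by omega),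
    jacobiOp]
  ring

lemma jacobiOp_green {R : Type*} [CommRing R] {a b φ ψ : ℕ → R}
    (hφ : ∀ j, jacobiOp a b φ j = 0) (hψ : ∀ j, jacobiOp a b ψ j = 0) (i j : ℕ) :
    jacobiOp a b (fun p ↦ φ (min i p) * ψ (max i p)) j =
      if i = j + 1 then a i * (φ i * ψ (i + 1) - φ (i + 1) * ψ i) else 0 := by
  have hφj := hφ j
  have hψj := hψ j
  simp only [jacobiOp] at hφj hψj ⊢
  rcases lt_trichotomy i (j + 1) with hij | rfl | hij
  · rw [if_neg hij.ne, min_eq_left (by omega : i ≤ j), max_eq_right (by omega : i ≤ j),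
      min_eq_left hij.le, max_eq_right hij.le, min_eq_left (by omega : i ≤ j + 2),
      max_eq_right (by omega : i ≤ j + 2)]
    linear_combination φ i * hψj
  · rw [if_pos rfl, min_eq_right (by omega : j ≤ j + 1), max_eq_left (by omega : j ≤ j + 1),
      min_self, max_self, min_eq_left (by omega : j + 1 ≤ j + 2),
      max_eq_right (by omega : j + 1 ≤ j + 2)]
    linear_combination ψ (j + 1) * hφj
  · rw [if_neg hij.ne', min_eq_right (by omega : j ≤ i), max_eq_left (by omega : j ≤ i),
      min_eq_right hij.le, max_eq_left hij.le, min_eq_right (by omega : j + 2 ≤ i),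
      max_eq_left (by omega : j + 2 ≤ i)]
    linear_combination ψ i * hφj

/-- Sequences obeying the three-term recurrence of the `q`-integers `[a]_q`, for which
`t = q + q⁻¹`. Other instances are `a ↦ [a m]_q` and the inclusion of `ℤ`, for which `t = 2`. -/
structure IsQIntegerSeq {R : Type*} [CommRing R] (t : R) (f : ℤ → R) : Prop where
  map_zero : f 0 = 0
  map_add_one_add_map_sub_one (a : ℤ) : f (a + 1) + f (a - 1) = t * f a

namespace IsQIntegerSeq

variable {R : Type*} [CommRing R] {t : R} {f : ℤ → R}

lemma map_neg_one (hf : IsQIntegerSeq t f) : f (-1) = -f 1 := by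
  have h := hf.map_add_one_add_map_sub_one 0
  rw [hf.map_zero, zero_add, zero_sub] at h
  linear_combination h

lemma map_neg_unit (hf : IsQIntegerSeq t f) (u : ℤˣ) : f (-u) = -f u := by
  rcases Int.units_eq_one_or u with rfl | rfl <;> simp [hf.map_neg_one]

lemma map_unit_sq (hf : IsQIntegerSeq t f) (u : ℤˣ) : f u ^ 2 = f 1 ^ 2 := by
  rcases Int.units_eq_one_or u with rfl | rfl <;> simp [hf.map_neg_one]

lemma map_add_unit_add_map_sub_unit (hf : IsQIntegerSeq t f) (u : ℤˣ) (x : ℤ) :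
    f (x + u) + f (x - u) = t * f x := by
  have h := hf.map_add_one_add_map_sub_one x
  rcases Int.units_eq_one_or u with rfl | rfl
  · exact h
  · rwa [Units.val_neg, Units.val_one, ← sub_eq_add_neg, sub_neg_eq_add, add_comm]

lemma unit_recurrence (hf : IsQIntegerSeq t f) (u v : ℤˣ) (x : ℤ) :
    f (-u) * f (x - u) + f (u + v) * f x + f (-v) * f (x + v) = 0 := by
  rcases eq_or_ne v u with rfl | huv
  · have h_double := hf.map_add_unit_add_map_sub_unit v v
    rw [sub_self, hf.map_zero, add_zero] at h_double
    rw [hf.map_neg_unit, h_double]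
    linear_combination -f v * hf.map_add_unit_add_map_sub_unit v x
  · obtain rfl := Int.units_ne_iff_eq_neg.mp huv
    rw [Units.val_neg, neg_neg, add_neg_cancel, hf.map_zero, hf.map_neg_unit, ← sub_eq_add_neg]
    ring

lemma casoratian_one (hf : IsQIntegerSeq t f) (x y : ℤ) :
    f (x + 1) * f y - f x * f (y - 1) = f 1 * f (x + y) := by
  have shift (x y : ℤ) :
      f (x + 1) * f y - f x * f (y - 1) = f x * f (y + 1) - f (x - 1) * f y := by
    linear_combination f y * hf.map_add_one_add_map_sub_one x -
      f x * hf.map_add_one_add_map_sub_one y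
  induction y using Int.induction_on generalizing x with
  | zero =>
    rw [hf.map_zero, zero_sub, hf.map_neg_one, add_zero]
    ring
  | succ y ih =>
    have h := shift (x + 1) y
    rw [ih, add_sub_cancel_right] at h
    rw [add_sub_cancel_right, ← h, add_right_comm, add_assoc]
  | pred y ih =>
    have h := shift x (-y - 1)
    rw [sub_add_cancel] at h
    have h' := ih (x - 1)
    rw [sub_add_cancel] at h'
    rw [h, h', sub_add_eq_add_sub, add_sub_assoc]

lemma casoratian (hf : IsQIntegerSeq t f) (u : ℤˣ) (x y : ℤ) :
    f (x + u) * f y - f x * f (y - u) = f u * f (x + y) := by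
  rcases Int.units_eq_one_or u with rfl | rfl
  · exact hf.casoratian_one x y
  · have h := hf.casoratian_one (x - 1) (y + 1)
    rw [sub_add_cancel, add_sub_cancel_right, sub_add_add_cancel] at h
    rw [Units.val_neg, Units.val_one, ← sub_eq_add_neg, sub_neg_eq_add, hf.map_neg_one]
    linear_combination -h

end IsQIntegerSeq

lemma isQIntegerSeq_qint {q : ℂ} (hq : q ≠ 0) (m : ℤ) :
    IsQIntegerSeq (q ^ m + q ^ (-m)) fun a ↦ qint q (a * m) where
  map_zero := by simp [qint]
  map_add_one_add_map_sub_one a := by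
    simp only [qint, add_mul, sub_mul, one_mul, zpow_neg, zpow_add₀ hq, zpow_sub₀ hq]
    field_simp
    ring

/-- The superdimension of the span of the first `p` basis vectors, when the `l`-th one (counted from
`0`) is even for `ε l = 1` and odd for `ε l = -1`. It extends `α` and `β` to arbitrary parities. -/
def superdim (ε : ℕ → ℤˣ) (p : ℕ) : ℤ := ∑ l ∈ Finset.range p, (ε l : ℤ)

/-- The symmetric Cartan matrix for the simple roots `δ_k - δ_{k+1}`, where `(δ_k, δ_k) = ε k`. -/
def cartanOfParity (ε : ℕ → ℤˣ) : ℕ → ℕ → ℤ :=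
  jacobiMatrix (fun k ↦ -(ε k : ℤ)) (fun k ↦ ε k + ε (k + 1))

lemma superdim_succ (ε : ℕ → ℤˣ) (p : ℕ) : superdim ε (p + 1) = superdim ε p + ε p :=
  Finset.sum_range_succ _ p

section InverseCartan

variable {R : Type*} [CommRing R] {t : R} {f : ℤ → R}

lemma jacobiOp_superdim_eq_zero (hf : IsQIntegerSeq t f) (ε : ℕ → ℤˣ) (j : ℕ) :
    jacobiOp (fun k ↦ f (-ε k)) (fun k ↦ f (ε k + ε (k + 1))) (fun p ↦ f (superdim ε p)) j = 0 := by
  have h := hf.unit_recurrence (ε j) (ε (j + 1)) (superdim ε (j + 1))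
  rwa [← superdim_succ, superdim_succ ε j, add_sub_cancel_right, ← superdim_succ] at h

lemma jacobiOp_sub_superdim_eq_zero (hf : IsQIntegerSeq t f) (ε : ℕ → ℤˣ) (d : ℤ) (j : ℕ) :
    jacobiOp (fun k ↦ f (-ε k)) (fun k ↦ f (ε k + ε (k + 1)))
      (fun p ↦ f (d - superdim ε p)) j = 0 := by
  have h := hf.unit_recurrence (ε (j + 1)) (ε j) (d - superdim ε (j + 1))
  rw [sub_sub, ← superdim_succ, superdim_succ ε j, sub_add_eq_sub_sub, sub_add_cancel,
    ← sub_add_eq_sub_sub, ← superdim_succ, add_comm (ε (j + 1) : ℤ)] at h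
  rw [jacobiOp]
  linear_combination h

theorem qdeformed_inverse_Cartan_general (hf : IsQIntegerSeq t f) (ε : ℕ → ℤˣ) {n : ℕ}
    (i j : Fin n) :
    ∑ k : Fin n,
      f (superdim ε (min (i + 1) (k + 1))) *
          f (superdim ε (n + 1) - superdim ε (max (i + 1) (k + 1))) *
        f (cartanOfParity ε k j) =
      (if i = j then 1 else 0) * f (superdim ε (n + 1)) * f 1 ^ 2 := by
  set d := superdim ε (n + 1) with hd
  let green (p : ℕ) : R := f (superdim ε (min (i + 1) p)) * f (d - superdim ε (max (i + 1) p))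
  have green_left : green 0 = 0 := by simp [green, superdim, hf.map_zero]
  have green_right : green (n + 1) = 0 := by simp [green, ← hd, hf.map_zero]
  simp only [cartanOfParity, map_jacobiMatrix hf.map_zero]
  have h_green := jacobiOp_green (jacobiOp_superdim_eq_zero hf ε)
    (jacobiOp_sub_superdim_eq_zero hf ε d) (i + 1) j
  refine (sum_mul_jacobiMatrix _ _ green green_left green_right j).trans (h_green.trans ?_)
  simp only [Nat.add_right_cancel_iff, Fin.val_inj, superdim_succ ε (i + 1), sub_add_eq_sub_sub,
    hf.map_neg_unit]
  have h_casoratian := hf.casoratian (ε (i + 1)) (superdim ε (i + 1)) (d - superdim ε (i + 1))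
  rw [add_sub_cancel] at h_casoratian
  split_ifs
  · linear_combination f (ε (i + 1)) * h_casoratian + f d * hf.map_unit_sq (ε (i + 1))
  · ring

end InverseCartan

/-- The parities of the distinguished basis of `sl(M+1|N+1)`: the even basis vectors come first. -/
def distinguishedParity (M l : ℕ) : ℤˣ := if l ≤ M then 1 else -1

lemma superdim_distinguishedParity (M p : ℕ) :
    superdim (distinguishedParity M) p = if p ≤ M + 1 then (p : ℤ) else 2 * (M + 1) - p := by
  induction p with
  | zero => simp [superdim]
  | succ p ih =>
    rw [superdim_succ, ih, distinguishedParity]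
    split_ifs <;> push_cast <;> omega

lemma superdim_distinguishedParity_last (M N : ℕ) :
    superdim (distinguishedParity M) (M + N + 1 + 1) = M - N := by
  rw [superdim_distinguishedParity]
  split_ifs <;> push_cast <;> omega

lemma alphaC_eq_superdim (M : ℕ) {n : ℕ} (i k : Fin n) :
    alphaC M i k = superdim (distinguishedParity M) (min (i + 1) (k + 1)) := by
  rw [superdim_distinguishedParity, alphaC]
  split_ifs <;> push_cast <;> omega

lemma betaC_eq_superdim_sub (M N : ℕ) {n : ℕ} (i k : Fin n) :
    betaC M N i k = (M - N) - superdim (distinguishedParity M) (max (i + 1) (k + 1)) := by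
  rw [superdim_distinguishedParity, betaC]
  split_ifs <;> push_cast <;> omega

lemma CartanSL_eq_cartanOfParity (M N : ℕ) (k j : Fin (M + N + 1)) :
    CartanSL M N k j = cartanOfParity (distinguishedParity M) k j := by
  simp only [CartanSL, cartanOfParity, jacobiMatrix, distinguishedParity, Fin.ext_iff]
  split_ifs <;> push_cast <;> omega

/-- q-deformed inverse Cartan matrix identity:
`Σ_k [α_{ik}m]_q [β_{ik}m]_q [A_{kj}m]_q = δ_{ij} [(M−N)m]_q ([m]_q)²`. -/
theorem qdeformed_inverse_Cartan (M N : ℕ) (hMN : M ≠ N) (q : ℂ) (hq : q ≠ 0)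
    (hq2 : q ^ 2 ≠ 1) (m : ℕ) (hm : 1 ≤ m) (i j : Fin (M + N + 1)) :
    (∑ k : Fin (M + N + 1),
      qint q (alphaC M i k * (m : ℤ)) * qint q (betaC M N i k * (m : ℤ)) *
        qint q (CartanSL M N k j * (m : ℤ)))
    = (if i = j then 1 else 0) * qint q (((M : ℤ) - (N : ℤ)) * (m : ℤ)) *
        (qint q (m : ℤ)) ^ 2 := by
  simpa only [alphaC_eq_superdim, betaC_eq_superdim_sub, CartanSL_eq_cartanOfParity,
    superdim_distinguishedParity_last, one_mul] using
    qdeformed_inverse_Cartan_general (isQIntegerSeq_qint hq m) (distinguishedParity M) i j
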